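/- arXiv:0806.2525 — 2 statements merged into one kernel-verified Lean document; each statement's English description precedes it below -/
import Mathlib

section
/- Let R f(ω) := Σ_{z∈Λ} f(T_z ω) p_z(ω) and R* f(ω) := Σ_{z∈Λ*} f(T_z ω) p_z*(ω), where Λ* := −Λ and p_z*(ω) := M(ω)^{−1} Σ_{i=1}^K Σ_{x∈ℤ^d} W_i(T_x ω)·1{(0,z) ∈ C_i* + x} with C_i* the reversal of C_i. Then for all measurable f,g : Ω → [0,∞], ∫ (R*f)·g dℚ = ∫ f·(Rg) dℚ; in particular, ℚ is an invariant measure for both R and R*: ∫ Rf dℚ = ∫ f dℚ = ∫ R*f dℚ. -/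
open scoped Classical

noncomputable section

/-- Points of `ℤ^d`. -/
abbrev Zd (d : ℕ) := Fin d → ℤ

/-- Euclidean norm on `ℤ^d`. -/
def eucNorm {d : ℕ} (v : Zd d) : ℝ := Real.sqrt (∑ i, ((v i : ℝ)) ^ 2)

/-- `M(ω) = Σ_i Σ_x W_i(T_x ω) · 1{0 ∈ C_i + x}`, where the `i`-th cycle is
`C_i = (z i 0, …, z i (n i))`. -/
def Mfun {d K : ℕ} {Ω : Type*} (n : Fin K → ℕ) (z : Fin K → ℕ → Zd d)
    (T : Zd d → Ω → Ω) (W : Fin K → Ω → ℝ) (ω : Ω) : ℝ :=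
  ∑ i : Fin K, ∑' x : Zd d, if ∃ j < n i, z i j + x = 0 then W i (T x ω) else 0

/-- `p_v(ω) = M(ω)⁻¹ Σ_i Σ_x W_i(T_x ω) · 1{(0,v) ∈ C_i + x}`. -/
def pfun {d K : ℕ} {Ω : Type*} (n : Fin K → ℕ) (z : Fin K → ℕ → Zd d)
    (T : Zd d → Ω → Ω) (W : Fin K → Ω → ℝ) (ω : Ω) (v : Zd d) : ℝ :=
  (Mfun n z T W ω)⁻¹ *
    ∑ i : Fin K, ∑' x : Zd d,
      if ∃ j, 1 ≤ j ∧ j ≤ n i ∧ z i (j - 1) + x = 0 ∧ z i j + x = v then W i (T x ω) else 0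

/-- `Λ`, the (finite) set of possible jumps. -/
def Lam {d K : ℕ} (n : Fin K → ℕ) (z : Fin K → ℕ → Zd d) : Finset (Zd d) :=
  Finset.univ.biUnion fun i => (Finset.range (n i)).image fun j => z i (j + 1) - z i j

/-- The quenched transition kernel `Q_ω(x,y) = p_{y-x}(T_x ω)`. -/
def Qker {d K : ℕ} {Ω : Type*} (n : Fin K → ℕ) (z : Fin K → ℕ → Zd d)
    (T : Zd d → Ω → Ω) (W : Fin K → Ω → ℝ) (ω : Ω) (x y : Zd d) : ℝ :=
  pfun n z T W (T x ω) (y - x)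

/-- `n`-fold composition of a transition kernel. -/
def kerpow {d : ℕ} (Q : Zd d → Zd d → ℝ) : ℕ → Zd d → Zd d → ℝ
  | 0 => fun x y => if x = y then 1 else 0
  | m + 1 => fun x y => ∑' zz : Zd d, kerpow Q m x zz * Q zz y

open MeasureTheory
open scoped ENNReal

/-- The invariant measure `ℚ` for the environment chain: density `M/Z` w.r.t. `ℙ`. -/
def Qmeas {d K : ℕ} {Ω : Type*} [MeasurableSpace Ω] (μ : Measure Ω)
    (n : Fin K → ℕ) (z : Fin K → ℕ → Zd d)
    (T : Zd d → Ω → Ω) (W : Fin K → Ω → ℝ) : Measure Ω :=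
  μ.withDensity fun ω => ENNReal.ofReal (Mfun n z T W ω / ∫ ω', Mfun n z T W ω' ∂μ)

/-- The transition operator `R` of the environment chain. -/
def Rop {d K : ℕ} {Ω : Type*} (n : Fin K → ℕ) (z : Fin K → ℕ → Zd d)
    (T : Zd d → Ω → Ω) (W : Fin K → Ω → ℝ) (f : Ω → ℝ) (ω : Ω) : ℝ :=
  ∑ v ∈ Lam n z, f (T v ω) * pfun n z T W ω v

/-- `p*_v(ω)`, the jump probabilities of the reversed cycles `C_i*`
(points `j ↦ z i (n i - j)`). -/
def pstarfun {d K : ℕ} {Ω : Type*} (n : Fin K → ℕ) (z : Fin K → ℕ → Zd d)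
    (T : Zd d → Ω → Ω) (W : Fin K → Ω → ℝ) (ω : Ω) (v : Zd d) : ℝ :=
  (Mfun n z T W ω)⁻¹ *
    ∑ i : Fin K, ∑' x : Zd d,
      if ∃ j, 1 ≤ j ∧ j ≤ n i ∧ z i (n i - (j - 1)) + x = 0 ∧ z i (n i - j) + x = v then
        W i (T x ω) else 0

/-- The operator `R` acting on `[0,∞]`-valued functions. -/
def RopE {d K : ℕ} {Ω : Type*} (n : Fin K → ℕ) (z : Fin K → ℕ → Zd d)
    (T : Zd d → Ω → Ω) (W : Fin K → Ω → ℝ) (f : Ω → ℝ≥0∞) (ω : Ω) : ℝ≥0∞ :=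
  ∑ v ∈ Lam n z, f (T v ω) * ENNReal.ofReal (pfun n z T W ω v)

/-- The operator `R*` acting on `[0,∞]`-valued functions; the sum runs over `Λ* = -Λ`. -/
def RstarE {d K : ℕ} {Ω : Type*} (n : Fin K → ℕ) (z : Fin K → ℕ → Zd d)
    (T : Zd d → Ω → Ω) (W : Fin K → Ω → ℝ) (f : Ω → ℝ≥0∞) (ω : Ω) : ℝ≥0∞ :=
  ∑ v ∈ (Lam n z).image (fun w => -w), f (T v ω) * ENNReal.ofReal (pstarfun n z T W ω v)

/-!
Reversing all cycles leaves `M` unchanged and turns `R` into `R*`, so `R*` needs no separate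
treatment. Index the edges `a → b` of the cycles by `e`, with weight `W_e`. Only the translate of a
cycle that carries `a` to `0` contributes an edge starting at `0`, hence
`M(ω) R g(ω) = ∑_e W_e(T_{-a} ω) g(T_{b-a} ω)`. Multiplying by `f`, integrating and substituting
`T_a ω` for `ω` gives `∫ f (R g) M dℙ = ∑_e ∫ W_e (f ∘ T_a) (g ∘ T_b) dℙ`, and reversing the
cycles merely exchanges the two endpoints, that is, the roles of `f` and `g`.
-/

/-- The sequence `a` traces a cycle of length `m`: it closes up after `m` steps, and the points
`a 0, …, a (m - 1)` are pairwise distinct. Values beyond `a m` are irrelevant, and `m = 0` is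
allowed. -/
structure IsCycle {G : Type*} (m : ℕ) (a : ℕ → G) : Prop where
  closed : a m = a 0
  injOn : Set.InjOn a (Set.Iio m)

theorem IsCycle.reverse {G : Type*} {m : ℕ} {a : ℕ → G} (ha : IsCycle m a) :
    IsCycle m fun j => a (m - j) where
  closed := by simp only [Nat.sub_self, Nat.sub_zero, ha.closed]
  injOn := by
    -- Replacing the index `m` by `0` brings the reversed indices back into the range of `ha.injOn`.
    have hmod : ∀ j, a (m - j) = a (if j = 0 then 0 else m - j) := by
      intro j
      split_ifs with hj
      · rw [hj, Nat.sub_zero, ha.closed]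
      · rfl
    intro j hj k hk hjk
    simp only [Set.mem_Iio] at hj hk
    simp only [hmod] at hjk
    have hidx := ha.injOn (Set.mem_Iio.2 (by split_ifs <;> omega))
      (Set.mem_Iio.2 (by split_ifs <;> omega)) hjk
    split_ifs at hidx <;> omega

theorem tsum_ite_exists_add_eq_zero {ι G E : Type*} [AddGroup G] [AddCommMonoid E]
    [TopologicalSpace E] {s : Finset ι} {a : ι → G} (ha : Set.InjOn a s) (h : G → E) :
    (∑' x : G, if ∃ j ∈ s, a j + x = 0 then h x else 0) = ∑ j ∈ s, h (-a j) := by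
  have hmem : ∀ x, (∃ j ∈ s, a j + x = 0) ↔ x ∈ s.image fun j => -a j := by
    simp only [Finset.mem_image, add_eq_zero_iff_neg_eq, implies_true]
  simp only [hmem]
  rw [tsum_eq_sum fun x hx => if_neg hx, Finset.sum_ite_mem, Finset.inter_self,
    Finset.sum_image fun j hj k hk hjk => ha hj hk (neg_injective hjk)]

theorem lintegral_translate_mul_mul {G Ω : Type*} [AddGroup G] [MeasurableSpace Ω] {μ : Measure Ω}
    {T : G → Ω → Ω} (hT : ∀ x y, T (x + y) = T x ∘ T y) (hT0 : T 0 = id)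
    (hTpres : ∀ x, MeasurePreserving (T x) μ μ) {w f g : Ω → ℝ≥0∞} (hw : Measurable w)
    (hf : Measurable f) (hg : Measurable g) (a b : G) :
    ∫⁻ ω, w (T (-a) ω) * (f ω * g (T (b - a) ω)) ∂μ
      = ∫⁻ ω, w ω * (f (T a ω) * g (T b ω)) ∂μ := by
  have hTm : ∀ x, Measurable (T x) := fun x => (hTpres x).measurable
  have hcomp : ∀ x ω, T x (T a ω) = T (x + a) ω := fun x ω => (congrFun (hT x a) ω).symm
  have hmeas : Measurable fun ω => w (T (-a) ω) * (f ω * g (T (b - a) ω)) :=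
    (hw.comp (hTm _)).mul (hf.mul (hg.comp (hTm _)))
  rw [← (hTpres a).lintegral_comp hmeas]
  simp only [hcomp, neg_add_cancel, sub_add_cancel, hT0, id]

section CycleWalk

variable {d K : ℕ} {Ω : Type*} {n : Fin K → ℕ} {z : Fin K → ℕ → Zd d} {T : Zd d → Ω → Ω}
  {W : Fin K → Ω → ℝ}

/-- Indices of the edges of the cycles: `⟨i, j⟩` stands for the edge from `z i j` to
`z i (j + 1)`. -/
def cycleEdges (n : Fin K → ℕ) : Finset (Σ _ : Fin K, ℕ) :=
  Finset.univ.sigma fun i => Finset.range (n i)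

/-- The displacement along an edge. -/
def edgeJump (z : Fin K → ℕ → Zd d) (e : Σ _ : Fin K, ℕ) : Zd d :=
  z e.1 (e.2 + 1) - z e.1 e.2

/-- The weight of the translate of an edge that starts at the origin. -/
def edgeWeight (z : Fin K → ℕ → Zd d) (T : Zd d → Ω → Ω) (W : Fin K → Ω → ℝ) (ω : Ω)
    (e : Σ _ : Fin K, ℕ) : ℝ :=
  W e.1 (T (-z e.1 e.2) ω)

/-- The reversed cycles `C_i*`. -/
def reverseCycles (n : Fin K → ℕ) (z : Fin K → ℕ → Zd d) : Fin K → ℕ → Zd d :=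
  fun i j => z i (n i - j)

theorem edgeWeight_nonneg (hW : ∀ i ω, 0 ≤ W i ω) (ω : Ω) (e : Σ _ : Fin K, ℕ) :
    0 ≤ edgeWeight z T W ω e :=
  hW _ _

theorem Lam_eq_image_edgeJump : Lam n z = (cycleEdges n).image (edgeJump z) := by
  ext v
  simp only [Lam, cycleEdges, edgeJump, Finset.mem_biUnion, Finset.mem_image, Finset.mem_sigma,
    Finset.mem_univ, true_and, Sigma.exists]

theorem Lam_reverseCycles : Lam n (reverseCycles n z) = (Lam n z).image fun v => -v := by
  simp only [Lam, reverseCycles, Finset.biUnion_image, Finset.image_image]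
  congr 1
  funext i
  ext v
  simp only [Finset.mem_image, Finset.mem_range, Function.comp_apply, neg_sub]
  constructor
  · rintro ⟨j, hj, rfl⟩
    exact ⟨n i - (j + 1), by omega, by rw [show n i - (j + 1) + 1 = n i - j by omega]⟩
  · rintro ⟨j, hj, rfl⟩
    refine ⟨n i - (j + 1), by omega, ?_⟩
    rw [show n i - (n i - (j + 1) + 1) = j by omega, show n i - (n i - (j + 1)) = j + 1 by omega]

theorem Mfun_reverseCycles (hclosed : ∀ i, z i (n i) = z i 0) :
    Mfun n (reverseCycles n z) T W = Mfun n z T W := by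
  have hiff : ∀ i (x : Zd d),
      (∃ j < n i, z i (n i - j) + x = 0) ↔ ∃ j < n i, z i j + x = 0 := by
    intro i x
    constructor <;> rintro ⟨j, hj, hx⟩ <;> rcases Nat.eq_zero_or_pos j with rfl | hj0
    · exact ⟨0, hj, by rwa [Nat.sub_zero, hclosed] at hx⟩
    · exact ⟨n i - j, by omega, hx⟩
    · exact ⟨0, hj, by rwa [Nat.sub_zero, hclosed]⟩
    · exact ⟨n i - j, by omega, by rwa [Nat.sub_sub_self hj.le]⟩
  funext ω
  simp only [Mfun, reverseCycles, hiff]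

theorem RopE_reverseCycles (hclosed : ∀ i, z i (n i) = z i 0) :
    RopE n (reverseCycles n z) T W = RstarE n z T W := by
  funext f ω
  simp only [RopE, RstarE, pfun, pstarfun, Lam_reverseCycles, Mfun_reverseCycles hclosed]
  rfl

theorem Mfun_nonneg (hW : ∀ i ω, 0 ≤ W i ω) (ω : Ω) : 0 ≤ Mfun n z T W ω :=
  Finset.sum_nonneg fun i _ => tsum_nonneg fun x => by
    split_ifs
    exacts [hW i _, le_rfl]

theorem Mfun_eq_sum_edgeWeight (hinj : ∀ i, Set.InjOn (z i) (Set.Iio (n i))) (ω : Ω) :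
    Mfun n z T W ω = ∑ e ∈ cycleEdges n, edgeWeight z T W ω e := by
  rw [cycleEdges, Finset.sum_sigma]
  refine Finset.sum_congr rfl fun i _ => ?_
  simpa only [Finset.mem_range, edgeWeight] using
    tsum_ite_exists_add_eq_zero (s := Finset.range (n i)) (by simpa using hinj i)
      fun x => W i (T x ω)

theorem pfun_eq_inv_mul_sum_edgeWeight (hinj : ∀ i, Set.InjOn (z i) (Set.Iio (n i))) (ω : Ω)
    (v : Zd d) :
    pfun n z T W ω v = (Mfun n z T W ω)⁻¹
      * ∑ e ∈ cycleEdges n with edgeJump z e = v, edgeWeight z T W ω e := by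
  have hiff : ∀ i (x : Zd d),
      (∃ j, 1 ≤ j ∧ j ≤ n i ∧ z i (j - 1) + x = 0 ∧ z i j + x = v)
        ↔ ∃ j ∈ ({k ∈ Finset.range (n i) | edgeJump z ⟨i, k⟩ = v} : Finset ℕ), z i j + x = 0 := by
    intro i x
    simp only [Finset.mem_filter, Finset.mem_range]
    simp only [edgeJump]
    constructor
    · rintro ⟨j, hj, hjn, hx, rfl⟩
      refine ⟨j - 1, ⟨by omega, ?_⟩, hx⟩
      rw [Nat.sub_add_cancel hj, eq_neg_of_add_eq_zero_left hx, sub_neg_eq_add]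
    · rintro ⟨j, ⟨hj, rfl⟩, hx⟩
      refine ⟨j + 1, by omega, hj, hx, ?_⟩
      rw [eq_neg_of_add_eq_zero_left hx, sub_neg_eq_add]
  rw [pfun, Finset.sum_filter, cycleEdges, Finset.sum_sigma]
  congr 1
  refine Finset.sum_congr rfl fun i _ => ?_
  have hinj_filter : Set.InjOn (z i)
      ({k ∈ Finset.range (n i) | edgeJump z ⟨i, k⟩ = v} : Finset ℕ) :=
    (hinj i).mono fun k hk => Finset.mem_range.1 (Finset.mem_filter.1 hk).1
  simp only [hiff, ← Finset.sum_filter, edgeWeight]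
  convert tsum_ite_exists_add_eq_zero hinj_filter fun x => W i (T x ω)

theorem Mfun_mul_pfun (hinj : ∀ i, Set.InjOn (z i) (Set.Iio (n i))) (hW : ∀ i ω, 0 ≤ W i ω)
    (ω : Ω) (v : Zd d) :
    Mfun n z T W ω * pfun n z T W ω v
      = ∑ e ∈ cycleEdges n with edgeJump z e = v, edgeWeight z T W ω e := by
  rw [pfun_eq_inv_mul_sum_edgeWeight hinj]
  -- Where `M` vanishes, `M⁻¹ = 0` makes the left side `0`, and every edge weight is `0` as well.
  rcases eq_or_ne (Mfun n z T W ω) 0 with hM | hM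
  · rw [Mfun_eq_sum_edgeWeight hinj,
      Finset.sum_eq_zero_iff_of_nonneg fun e _ => edgeWeight_nonneg hW ω e] at hM
    rw [Finset.sum_eq_zero fun e he => hM e (Finset.mem_filter.1 he).1, mul_zero, mul_zero]
  · exact mul_inv_cancel_left₀ hM _

theorem ofReal_Mfun_mul_RopE (hinj : ∀ i, Set.InjOn (z i) (Set.Iio (n i)))
    (hW : ∀ i ω, 0 ≤ W i ω) (g : Ω → ℝ≥0∞) (ω : Ω) :
    ENNReal.ofReal (Mfun n z T W ω) * RopE n z T W g ω
      = ∑ e ∈ cycleEdges n, ENNReal.ofReal (edgeWeight z T W ω e) * g (T (edgeJump z e) ω) := by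
  have hjump : ∀ v, ENNReal.ofReal (Mfun n z T W ω)
        * (g (T v ω) * ENNReal.ofReal (pfun n z T W ω v))
      = ∑ e ∈ cycleEdges n with edgeJump z e = v,
          ENNReal.ofReal (edgeWeight z T W ω e) * g (T (edgeJump z e) ω) := by
    intro v
    rw [mul_left_comm, ← ENNReal.ofReal_mul (Mfun_nonneg hW ω), Mfun_mul_pfun hinj hW,
      ENNReal.ofReal_sum_of_nonneg fun e _ => edgeWeight_nonneg hW ω e, Finset.mul_sum]
    refine Finset.sum_congr rfl fun e he => ?_
    rw [(Finset.mem_filter.1 he).2, mul_comm]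
  rw [RopE, Finset.mul_sum, Finset.sum_congr rfl fun v _ => hjump v, Lam_eq_image_edgeJump]
  exact Finset.sum_fiberwise_of_maps_to (fun e => Finset.mem_image_of_mem _) _

theorem RopE_one (hinj : ∀ i, Set.InjOn (z i) (Set.Iio (n i))) (hW : ∀ i ω, 0 ≤ W i ω) {ω : Ω}
    (hM : ENNReal.ofReal (Mfun n z T W ω) ≠ 0) : RopE n z T W 1 ω = 1 := by
  refine (ENNReal.mul_eq_left hM ENNReal.ofReal_ne_top).1 ?_
  rw [ofReal_Mfun_mul_RopE hinj hW, Mfun_eq_sum_edgeWeight hinj,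
    ENNReal.ofReal_sum_of_nonneg fun e _ => edgeWeight_nonneg hW ω e]
  simp only [Pi.one_apply, mul_one]

variable [MeasurableSpace Ω] {μ : Measure Ω}

/-- The measure with density `M` with respect to `μ`, that is, `ℚ` before normalization. -/
def massMeasure (μ : Measure Ω) (n : Fin K → ℕ) (z : Fin K → ℕ → Zd d) (T : Zd d → Ω → Ω)
    (W : Fin K → Ω → ℝ) : Measure Ω :=
  μ.withDensity fun ω => ENNReal.ofReal (Mfun n z T W ω)

/-- The bilinear form `∫ f (R g) M dμ`, written as a sum over the edges of the untranslated
cycles. -/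
def cycleForm (μ : Measure Ω) (n : Fin K → ℕ) (z : Fin K → ℕ → Zd d) (T : Zd d → Ω → Ω)
    (W : Fin K → Ω → ℝ) (f g : Ω → ℝ≥0∞) : ℝ≥0∞ :=
  ∑ e ∈ cycleEdges n,
    ∫⁻ ω, ENNReal.ofReal (W e.1 ω) * (f (T (z e.1 e.2) ω) * g (T (z e.1 (e.2 + 1)) ω)) ∂μ

theorem Qmeas_eq_smul_massMeasure (hW : ∀ i ω, 0 ≤ W i ω) :
    Qmeas μ n z T W
      = ENNReal.ofReal (∫ ω, Mfun n z T W ω ∂μ)⁻¹ • massMeasure μ n z T W := by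
  rw [massMeasure, ← withDensity_smul' _ _ ENNReal.ofReal_ne_top, Qmeas]
  congr 1
  funext ω
  rw [Pi.smul_apply, smul_eq_mul, div_eq_mul_inv, ENNReal.ofReal_mul (Mfun_nonneg hW ω), mul_comm]

theorem cycleForm_reverseCycles (f g : Ω → ℝ≥0∞) :
    cycleForm μ n (reverseCycles n z) T W f g = cycleForm μ n z T W g f := by
  simp only [cycleForm, cycleEdges, Finset.sum_sigma, reverseCycles]
  refine Finset.sum_congr rfl fun i _ => ?_
  rw [← Finset.sum_range_reflect]
  refine Finset.sum_congr rfl fun j hj => ?_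
  have hj : j < n i := Finset.mem_range.1 hj
  rw [show n i - (n i - 1 - j) = j + 1 by omega, show n i - (n i - 1 - j + 1) = j by omega]
  simp only [mul_comm (f _)]

theorem measurable_Mfun (hinj : ∀ i, Set.InjOn (z i) (Set.Iio (n i)))
    (hT : ∀ x, Measurable (T x)) (hW : ∀ i, Measurable (W i)) : Measurable (Mfun n z T W) := by
  rw [funext (Mfun_eq_sum_edgeWeight hinj)]
  exact Finset.measurable_fun_sum _ fun e _ => (hW e.1).comp (hT _)

theorem lintegral_mul_RopE_massMeasure (hinj : ∀ i, Set.InjOn (z i) (Set.Iio (n i)))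
    (hT : ∀ x y, T (x + y) = T x ∘ T y) (hT0 : T 0 = id)
    (hTpres : ∀ x, MeasurePreserving (T x) μ μ) (hW : ∀ i ω, 0 ≤ W i ω)
    (hWmeas : ∀ i, Measurable (W i)) {f g : Ω → ℝ≥0∞} (hf : Measurable f) (hg : Measurable g) :
    ∫⁻ ω, f ω * RopE n z T W g ω ∂massMeasure μ n z T W = cycleForm μ n z T W f g := by
  have hTm : ∀ x, Measurable (T x) := fun x => (hTpres x).measurable
  have hwm : ∀ i, Measurable fun ω => ENNReal.ofReal (W i ω) := fun i => (hWmeas i).ennreal_ofReal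
  calc ∫⁻ ω, f ω * RopE n z T W g ω ∂massMeasure μ n z T W
      = ∫⁻ ω, ENNReal.ofReal (Mfun n z T W ω) * (f ω * RopE n z T W g ω) ∂μ :=
        lintegral_withDensity_eq_lintegral_mul_non_measurable μ
          (measurable_Mfun hinj hTm hWmeas).ennreal_ofReal (by simp) _
    _ = ∫⁻ ω, ∑ e ∈ cycleEdges n, ENNReal.ofReal (edgeWeight z T W ω e)
          * (f ω * g (T (edgeJump z e) ω)) ∂μ := by
        refine lintegral_congr fun ω => ?_
        rw [mul_left_comm, ofReal_Mfun_mul_RopE hinj hW, Finset.mul_sum]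
        exact Finset.sum_congr rfl fun e _ => mul_left_comm _ _ _
    _ = ∑ e ∈ cycleEdges n, ∫⁻ ω, ENNReal.ofReal (edgeWeight z T W ω e)
          * (f ω * g (T (edgeJump z e) ω)) ∂μ :=
        lintegral_finsetSum _ fun e _ =>
          ((hwm e.1).comp (hTm _)).mul (hf.mul (hg.comp (hTm _)))
    _ = cycleForm μ n z T W f g :=
        Finset.sum_congr rfl fun e _ =>
          lintegral_translate_mul_mul hT hT0 hTpres (hwm e.1) hf hg _ _

theorem lintegral_mul_RopE_one_massMeasure (hinj : ∀ i, Set.InjOn (z i) (Set.Iio (n i)))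
    (hT : ∀ x, Measurable (T x)) (hW : ∀ i ω, 0 ≤ W i ω) (hWmeas : ∀ i, Measurable (W i))
    (f : Ω → ℝ≥0∞) :
    ∫⁻ ω, f ω * RopE n z T W 1 ω ∂massMeasure μ n z T W = ∫⁻ ω, f ω ∂massMeasure μ n z T W := by
  have hone : ∀ᵐ ω ∂massMeasure μ n z T W, RopE n z T W 1 ω = 1 :=
    (ae_withDensity_iff (measurable_Mfun hinj hT hWmeas).ennreal_ofReal).2
      (.of_forall fun ω => RopE_one hinj hW)
  refine lintegral_congr_ae ?_
  filter_upwards [hone] with ω hω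
  rw [hω, mul_one]

theorem massMeasure_reverseCycles (hclosed : ∀ i, z i (n i) = z i 0) :
    massMeasure μ n (reverseCycles n z) T W = massMeasure μ n z T W := by
  rw [massMeasure, Mfun_reverseCycles hclosed, massMeasure]

theorem Rstar_adjoint_of_R_and_Q_invariant_general (hz : ∀ i, IsCycle (n i) (z i))
    (hT : ∀ x y, T (x + y) = T x ∘ T y) (hT0 : T 0 = id)
    (hTpres : ∀ x, MeasurePreserving (T x) μ μ) (hW : ∀ i ω, 0 ≤ W i ω)
    (hWmeas : ∀ i, Measurable (W i)) :
    (∀ f g : Ω → ℝ≥0∞, Measurable f → Measurable g →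
      ∫⁻ ω, RstarE n z T W f ω * g ω ∂massMeasure μ n z T W
        = ∫⁻ ω, f ω * RopE n z T W g ω ∂massMeasure μ n z T W) ∧
    ∀ f : Ω → ℝ≥0∞, Measurable f →
      ∫⁻ ω, RopE n z T W f ω ∂massMeasure μ n z T W = ∫⁻ ω, f ω ∂massMeasure μ n z T W ∧
      ∫⁻ ω, RstarE n z T W f ω ∂massMeasure μ n z T W = ∫⁻ ω, f ω ∂massMeasure μ n z T W := by
  have hclosed := fun i => (hz i).closed
  have hinj := fun i => (hz i).injOn
  have hinj' : ∀ i, Set.InjOn (reverseCycles n z i) (Set.Iio (n i)) := fun i =>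
    (hz i).reverse.injOn
  have hTm : ∀ x, Measurable (T x) := fun x => (hTpres x).measurable
  have hadj : ∀ f g : Ω → ℝ≥0∞, Measurable f → Measurable g →
      ∫⁻ ω, RstarE n z T W f ω * g ω ∂massMeasure μ n z T W
        = ∫⁻ ω, f ω * RopE n z T W g ω ∂massMeasure μ n z T W := by
    intro f g hf hg
    simp only [mul_comm _ (g _)]
    rw [lintegral_mul_RopE_massMeasure hinj hT hT0 hTpres hW hWmeas hf hg,
      ← cycleForm_reverseCycles,
      ← lintegral_mul_RopE_massMeasure hinj' hT hT0 hTpres hW hWmeas hg hf,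
      massMeasure_reverseCycles hclosed, RopE_reverseCycles hclosed]
  refine ⟨hadj, fun f hf => ⟨?_, ?_⟩⟩
  · have hone := lintegral_mul_RopE_one_massMeasure (μ := μ) hinj' hTm hW hWmeas f
    rw [massMeasure_reverseCycles hclosed, RopE_reverseCycles hclosed] at hone
    simpa only [mul_comm (f _), hadj 1 f measurable_one hf, Pi.one_apply, one_mul] using hone
  · simpa only [← hadj f 1 hf measurable_one, Pi.one_apply, mul_one] using
      lintegral_mul_RopE_one_massMeasure (μ := μ) hinj hTm hW hWmeas f

end CycleWalk

theorem Rstar_adjoint_of_R_and_Q_invariant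
    (d K : ℕ) (hd : 0 < d) (hK : 0 < K) (Ω : Type*) [MeasurableSpace Ω]
    (μ : Measure Ω) [IsProbabilityMeasure μ]
    (n : Fin K → ℕ) (z : Fin K → ℕ → Zd d)
    (T : Zd d → Ω → Ω) (W : Fin K → Ω → ℝ) (c C : ℝ)
    (hlen : ∀ i, 0 < n i)
    (hcyc : ∀ i, z i (n i) = z i 0)
    (hinj : ∀ i, ∀ j k, j < n i → k < n i → z i j = z i k → j = k)
    (hT : ∀ x y : Zd d, T (x + y) = T x ∘ T y) (hT0 : T 0 = id)
    (hTpres : ∀ x : Zd d, MeasurePreserving (T x) μ μ)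
    (hW : ∀ i ω, 0 ≤ W i ω) (hWmeas : ∀ i, Measurable (W i))
    (hc : 0 < c) (hCfin : c ≤ C)
    (hM : ∀ ω, c ≤ Mfun n z T W ω ∧ Mfun n z T W ω ≤ C) :
    (∀ f g : Ω → ℝ≥0∞, Measurable f → Measurable g →
      ∫⁻ ω, RstarE n z T W f ω * g ω ∂(Qmeas μ n z T W)
        = ∫⁻ ω, f ω * RopE n z T W g ω ∂(Qmeas μ n z T W)) ∧
    (∀ f : Ω → ℝ≥0∞, Measurable f →
      (∫⁻ ω, RopE n z T W f ω ∂(Qmeas μ n z T W) = ∫⁻ ω, f ω ∂(Qmeas μ n z T W)) ∧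
      (∫⁻ ω, RstarE n z T W f ω ∂(Qmeas μ n z T W) = ∫⁻ ω, f ω ∂(Qmeas μ n z T W))) := by
  have hz : ∀ i, IsCycle (n i) (z i) := fun i => ⟨hcyc i, fun j hj k hk => hinj i j k hj hk⟩
  obtain ⟨hadj, hinv⟩ :=
    Rstar_adjoint_of_R_and_Q_invariant_general hz hT hT0 hTpres hW hWmeas
  simp only [Qmeas_eq_smul_massMeasure hW, lintegral_smul_measure]
  exact ⟨fun f g hf hg => by rw [hadj f g hf hg],
    fun f hf => ⟨by rw [(hinv f hf).1], by rw [(hinv f hf).2]⟩⟩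

end
end

section
/- (Induction lemma from the proof of Proposition 2.2) Let d ≥ 1, κ > 0 and C₀ > 0 be such that 1 − κ C₀^{2/d}/(n+1) ≤ (n/(n+1))^{d/2} for every integer n ≥ 1. Let (u_n)_{n ≥ 1} be a sequence of non-negative reals with u_1 ≤ C₀ and u_{n+1} ≤ u_n (1 − κ u_n^{2/d}) for every n ≥ 1. Then u_n ≤ C₀ / n^{d/2} for every n ≥ 1. -/
/-!
Write `φ x = κ * x ^ (2 / d)` and `b n = C₀ / n ^ (d / 2)`. The condition on `C₀` says exactly that
`b n * (1 - φ (b (n + 1))) ≤ b (n + 1)`, i.e. `b` is a supersolution of the implicit scheme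
`v (n + 1) = v n * (1 - φ (v (n + 1)))`. Although `x ↦ x * (1 - φ x)` is not monotone, such a `b`
dominates every subsolution `u` of the explicit scheme: either `u n` is already below `b (n + 1)`,
or `φ (u n) ≥ φ (b (n + 1))` by monotonicity of `φ`.
-/

open Set

section Comparison

variable {R : Type*} [Ring R] [LinearOrder R] [IsOrderedRing R] {φ : R → R}

lemma mul_one_sub_le_of_monotoneOn (hφ : MonotoneOn φ (Ici 0)) (hφ₀ : 0 ≤ φ 0) {x A B : R}
    (hx : 0 ≤ x) (hB : 0 ≤ B) (hxA : x ≤ A) (hAB : A * (1 - φ B) ≤ B) :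
    x * (1 - φ x) ≤ B := by
  rcases le_total x B with hxB | hBx
  · have hφx : 0 ≤ φ x := hφ₀.trans (hφ self_mem_Ici hx hx)
    exact (mul_le_of_le_one_right hx (sub_le_self 1 hφx)).trans hxB
  · have hφBx : φ B ≤ φ x := hφ hB hx hBx
    calc x * (1 - φ x) ≤ x * (1 - φ B) := by gcongr
      _ ≤ B := by
        rcases le_total 0 (1 - φ B) with hpos | hneg
        · exact (mul_le_mul_of_nonneg_right hxA hpos).trans hAB
        · exact (mul_nonpos_of_nonneg_of_nonpos hx hneg).trans hB

lemma le_of_subsolution_of_implicit_supersolution (hφ : MonotoneOn φ (Ici 0)) (hφ₀ : 0 ≤ φ 0)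
    {u b : ℕ → R} {m : ℕ} (hu : ∀ n, m ≤ n → 0 ≤ u n) (hb : ∀ n, m ≤ n → 0 ≤ b n)
    (hum : u m ≤ b m) (hsub : ∀ n, m ≤ n → u (n + 1) ≤ u n * (1 - φ (u n)))
    (hsuper : ∀ n, m ≤ n → b n * (1 - φ (b (n + 1))) ≤ b (n + 1)) :
    ∀ n, m ≤ n → u n ≤ b n := by
  intro n hn
  induction n, hn using Nat.le_induction with
  | base => exact hum
  | succ n hn ih =>
    exact (hsub n hn).trans <| mul_one_sub_le_of_monotoneOn hφ hφ₀ (hu n hn)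
      (hb (n + 1) (Nat.le_succ_of_le hn)) ih (hsuper n hn)

end Comparison

lemma monotoneOn_const_mul_rpow {κ q : ℝ} (hκ : 0 ≤ κ) (hq : 0 ≤ q) :
    MonotoneOn (fun x : ℝ ↦ κ * x ^ q) (Ici 0) :=
  fun _ hx _ _ hxy ↦ mul_le_mul_of_nonneg_left (Real.rpow_le_rpow hx hxy hq) hκ

lemma div_rpow_mul_one_sub_le {p κ C s t : ℝ} (hp : p ≠ 0) (hC : 0 ≤ C) (hs : 0 < s) (ht : 0 ≤ t)
    (hcond : 1 - κ * C ^ p⁻¹ / t ≤ (s / t) ^ p) :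
    C / s ^ p * (1 - κ * (C / t ^ p) ^ p⁻¹) ≤ C / t ^ p := by
  have hroot : (C / t ^ p) ^ p⁻¹ = C ^ p⁻¹ / t := by
    rw [Real.div_rpow hC (by positivity), Real.rpow_rpow_inv ht hp]
  calc C / s ^ p * (1 - κ * (C / t ^ p) ^ p⁻¹)
      = C / s ^ p * (1 - κ * C ^ p⁻¹ / t) := by rw [hroot, mul_div_assoc]
    _ ≤ C / s ^ p * (s / t) ^ p := by gcongr
    _ = C / t ^ p := by
      rw [Real.div_rpow hs.le ht]
      exact div_mul_div_cancel₀ (by positivity)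

theorem induction_lemma_nash_decay_general {d κ C₀ : ℝ} (hd : 0 < d) (hκ : 0 ≤ κ)
    (hcond : ∀ n : ℕ, 1 ≤ n →
      1 - κ * C₀ ^ (2 / d) / ((n : ℝ) + 1) ≤ ((n : ℝ) / ((n : ℝ) + 1)) ^ (d / 2))
    {u : ℕ → ℝ} (hu : ∀ n : ℕ, 1 ≤ n → 0 ≤ u n) (hu1 : u 1 ≤ C₀)
    (hrec : ∀ n : ℕ, 1 ≤ n → u (n + 1) ≤ u n * (1 - κ * u n ^ (2 / d))) :
    ∀ n : ℕ, 1 ≤ n → u n ≤ C₀ / (n : ℝ) ^ (d / 2) := by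
  have hC₀ : 0 ≤ C₀ := (hu 1 le_rfl).trans hu1
  have hsuper : ∀ n : ℕ, 1 ≤ n →
      C₀ / (n : ℝ) ^ (d / 2) * (1 - κ * (C₀ / ((n + 1 : ℕ) : ℝ) ^ (d / 2)) ^ (2 / d)) ≤
        C₀ / ((n + 1 : ℕ) : ℝ) ^ (d / 2) := by
    intro n hn
    have hn₀ : (0 : ℝ) < n := by exact_mod_cast hn
    rw [← inv_div d 2]
    refine div_rpow_mul_one_sub_le (by positivity) hC₀ hn₀ (by positivity) ?_
    simpa only [inv_div, Nat.cast_add_one] using hcond n hn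
  exact le_of_subsolution_of_implicit_supersolution
    (monotoneOn_const_mul_rpow hκ (by positivity)) (by positivity) hu
    (fun n _ ↦ by positivity) (by simpa using hu1) hrec hsuper

theorem induction_lemma_nash_decay
    (d : ℕ) (hd : 1 ≤ d) (κ C₀ : ℝ) (hκ : 0 < κ) (hC₀ : 0 < C₀)
    (hcond : ∀ n : ℕ, 1 ≤ n →
      1 - κ * C₀ ^ ((2 : ℝ) / (d : ℝ)) / ((n : ℝ) + 1) ≤ ((n : ℝ) / ((n : ℝ) + 1)) ^ ((d : ℝ) / 2))
    (u : ℕ → ℝ) (hu : ∀ n : ℕ, 1 ≤ n → 0 ≤ u n) (hu1 : u 1 ≤ C₀)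
    (hrec : ∀ n : ℕ, 1 ≤ n → u (n + 1) ≤ u n * (1 - κ * u n ^ ((2 : ℝ) / (d : ℝ)))) :
    ∀ n : ℕ, 1 ≤ n → u n ≤ C₀ / (n : ℝ) ^ ((d : ℝ) / 2) :=
  induction_lemma_nash_decay_general (Nat.cast_pos.mpr hd) hκ.le hcond hu hu1 hrec
end
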